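/- Let X be a finite type, μ a probability mass function on X, and g : X → ℝ with Var_μ(g) > 0. Define L(f) = E_μ[(f − g)²] + E_μ[f·g] − E_μ[f]·E_μ[g] for f : X → ℝ. Then for every ε ∈ ℝ, L((1−ε)·g) − L(g) = ε·(ε·E_μ[g²] − Var_μ(g)); consequently there exists ε > 0 with L((1−ε)·g) < L(g), so there is a finite set of functions ℱ containing g such that g does not minimize L over ℱ. -/

import Mathlib

open Finset

/-- Expectation of `f` under the probability mass function `μ`. -/
noncomputable def pmfExp {X : Type*} [Fintype X] (μ f : X → ℝ) : ℝ :=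
  ∑ x, μ x * f x

/-- The loss `L(f) = E_μ[(f − g)²] + E_μ[f·g] − E_μ[f]·E_μ[g]` (squared error plus the
covariance of `f` and `g` under `μ`). -/
noncomputable def covLoss {X : Type*} [Fintype X] (μ g f : X → ℝ) : ℝ :=
  pmfExp μ (fun x => (f x - g x) ^ 2)
    + pmfExp μ (fun x => f x * g x) - pmfExp μ f * pmfExp μ g

/-! Perturbing `f = g` in a direction `-h` changes the squared error only to second order, whereas
the covariance term changes to first order, by `-ε Cov(h, g)`. Hence `g` is not even a local
minimizer as soon as some `h` is positively correlated with it, and `h = g` is such a direction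
when `g` has positive variance. -/

/-- The covariance `E_μ[f·g] − E_μ[f]·E_μ[g]` of `f` and `g` under the weights `μ`, that is, the
term of `covLoss` that drives the descent. -/
noncomputable def pmfCov {X : Type*} [Fintype X] (μ f g : X → ℝ) : ℝ :=
  pmfExp μ (fun x => f x * g x) - pmfExp μ f * pmfExp μ g

section

variable {X : Type*} [Fintype X] (μ : X → ℝ)

theorem pmfExp_const_mul (c : ℝ) (f : X → ℝ) :
    pmfExp μ (fun x => c * f x) = c * pmfExp μ f := by
  simp only [pmfExp, mul_sum, mul_left_comm]

theorem pmfExp_sub (f₁ f₂ : X → ℝ) :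
    pmfExp μ (fun x => f₁ x - f₂ x) = pmfExp μ f₁ - pmfExp μ f₂ := by
  simp only [pmfExp, mul_sub, sum_sub_distrib]

theorem pmfCov_const_mul_left (c : ℝ) (f g : X → ℝ) :
    pmfCov μ (fun x => c * f x) g = c * pmfCov μ f g := by
  simp only [pmfCov, mul_assoc, pmfExp_const_mul, mul_sub]

theorem pmfCov_sub_left (f₁ f₂ g : X → ℝ) :
    pmfCov μ (fun x => f₁ x - f₂ x) g = pmfCov μ f₁ g - pmfCov μ f₂ g := by
  simp only [pmfCov, sub_mul, pmfExp_sub]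
  ring

theorem covLoss_eq_add_pmfCov (g f : X → ℝ) :
    covLoss μ g f = pmfExp μ (fun x => (f x - g x) ^ 2) + pmfCov μ f g :=
  add_sub_assoc _ _ _

theorem covLoss_self (g : X → ℝ) : covLoss μ g g = pmfCov μ g g := by
  simp [covLoss_eq_add_pmfCov, pmfExp]

theorem covLoss_sub_const_mul (g h : X → ℝ) (ε : ℝ) :
    covLoss μ g (fun x => g x - ε * h x) - covLoss μ g g
      = ε * (ε * pmfExp μ (fun x => h x ^ 2) - pmfCov μ h g) := by
  have hsq : pmfExp μ (fun x => (g x - ε * h x - g x) ^ 2)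
      = ε ^ 2 * pmfExp μ (fun x => h x ^ 2) := by
    simp only [sub_sub_cancel_left, neg_sq, mul_pow, pmfExp_const_mul]
  have hcov : pmfCov μ (fun x => g x - ε * h x) g = pmfCov μ g g - ε * pmfCov μ h g := by
    rw [pmfCov_sub_left, pmfCov_const_mul_left]
  rw [covLoss_self, covLoss_eq_add_pmfCov, hsq, hcov]
  ring

theorem exists_pos_covLoss_sub_const_mul_lt {g h : X → ℝ} (hcov : 0 < pmfCov μ h g) :
    ∃ ε : ℝ, 0 < ε ∧ covLoss μ g (fun x => g x - ε * h x) < covLoss μ g g := by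
  obtain ⟨ε, hε, hlt⟩ := exists_pos_mul_lt hcov (pmfExp μ fun x => h x ^ 2)
  refine ⟨ε, hε, ?_⟩
  rw [← sub_neg, covLoss_sub_const_mul, mul_comm ε (pmfExp μ _)]
  exact mul_neg_of_pos_of_neg hε (sub_neg.mpr hlt)

theorem covLoss_descent_general (g h : X → ℝ) (hcov : 0 < pmfCov μ h g) :
    (∀ ε : ℝ,
      covLoss μ g (fun x => g x - ε * h x) - covLoss μ g g
        = ε * (ε * pmfExp μ (fun x => h x ^ 2) - pmfCov μ h g))
    ∧ (∃ ε : ℝ, 0 < ε ∧ covLoss μ g (fun x => g x - ε * h x) < covLoss μ g g)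
    ∧ (∃ F : Finset (X → ℝ), g ∈ F ∧ ¬ (∀ f ∈ F, covLoss μ g g ≤ covLoss μ g f)) := by
  classical
  have hdescent := exists_pos_covLoss_sub_const_mul_lt μ hcov
  refine ⟨covLoss_sub_const_mul μ g h, hdescent, ?_⟩
  obtain ⟨ε, -, hlt⟩ := hdescent
  exact ⟨{g, fun x => g x - ε * h x}, by simp, fun hmin => (hmin _ (by simp)).not_gt hlt⟩

end

/-- If `Var_μ(g) = E_μ[g²] − (E_μ[g])² > 0, then for every `ε`,
`L((1−ε)·g) − L(g) = ε·(ε·E_μ[g²] − Var_μ(g))`; consequently some `ε > 0` gives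
`L((1−ε)·g) < L(g)`, so there is a finite set `ℱ ∋ g` of functions over which `g` does
not minimize `L`. -/
theorem covLoss_descent {X : Type*} [Fintype X]
    (μ : X → ℝ) (hμ0 : ∀ x, 0 ≤ μ x) (hμ1 : ∑ x, μ x = 1)
    (g : X → ℝ)
    (hvar : 0 < pmfExp μ (fun x => (g x) ^ 2) - (pmfExp μ g) ^ 2) :
    (∀ ε : ℝ,
      covLoss μ g (fun x => (1 - ε) * g x) - covLoss μ g g
        = ε * (ε * pmfExp μ (fun x => (g x) ^ 2)
            - (pmfExp μ (fun x => (g x) ^ 2) - (pmfExp μ g) ^ 2)))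
    ∧ (∃ ε : ℝ, 0 < ε ∧ covLoss μ g (fun x => (1 - ε) * g x) < covLoss μ g g)
    ∧ (∃ F : Finset (X → ℝ), g ∈ F ∧ ¬ (∀ f ∈ F, covLoss μ g g ≤ covLoss μ g f)) := by
  simpa only [pmfCov, one_sub_mul, ← sq] using
    covLoss_descent_general μ g g (by simpa only [pmfCov, ← sq] using hvar)
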